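/- Let (A,+) be a finite abelian group, Z a proper subset of A, and N = A \ Z (so N is nonempty), with stabilizer H(N) = {g ∈ A : g + N = N}. If t is the maximum length of a Z-independent sequence of distinct elements of A, then (t − 1)·|N| ≥ |A| − |H(N)|. -/

import Mathlib

open Function Set

/-- A sequence `α₁, …, α_t` in `A` is `Z`-independent if there are `ψ₁, …, ψ_t` in `A`
with `ψ_i + α_i ∉ Z` for all `i` and `ψ_i + α_j ∈ Z` for all `j < i`. -/
def ZIndepSeq {A : Type*} [AddCommGroup A] (Z : Set A) {t : ℕ} (α : Fin t → A) : Prop :=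
  ∃ ψ : Fin t → A, (∀ i, ψ i + α i ∉ Z) ∧ ∀ i j : Fin t, j < i → ψ i + α j ∈ Z

/-- The union of the translates of `Zᶜ` determined by `α`. -/
def covSet {A : Type*} [AddCommGroup A] (Z : Set A) {t : ℕ} (α : Fin t → A) : Set A :=
  {x | ∃ i, x + α i ∉ Z}

theorem snoc_indep {A : Type*} [AddCommGroup A] (Z : Set A) {s : ℕ} (α : Fin s → A)
    (hinj : Function.Injective α) (h : ZIndepSeq Z α) (a x : A) (hx : x ∉ covSet Z α)
    (hxa : x + a ∉ Z) :
    Function.Injective (Fin.snoc α a : Fin (s+1) → A) ∧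
      ZIndepSeq Z (Fin.snoc α a : Fin (s+1) → A) := by
  have hx' : ∀ i, x + α i ∈ Z := by
    intro i
    by_contra hc
    exact hx ⟨i, hc⟩
  constructor
  · rw [Fin.snoc_injective_iff]
    refine ⟨hinj, ?_⟩
    rintro ⟨i, rfl⟩
    exact hxa (hx' i)
  · obtain ⟨ψ, h1, h2⟩ := h
    refine ⟨(Fin.snoc ψ x : Fin (s+1) → A), ?_, ?_⟩
    · intro i
      refine Fin.lastCases ?_ (fun i => ?_) i
      · simpa using hxa
      · simpa using h1 i
    · intro i j
      refine Fin.lastCases ?_ (fun i => ?_) i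
      · refine Fin.lastCases ?_ (fun j => ?_) j
        · intro h; exact absurd h (lt_irrefl _)
        · intro _; simpa using hx' j
      · refine Fin.lastCases ?_ (fun j => ?_) j
        · intro h; exact absurd h (not_lt.2 (Fin.le_last _))
        · intro h; simpa using h2 i j (by simpa using h)

theorem covSet_card {A : Type*} [AddCommGroup A] [Fintype A] (Z : Set A) {s : ℕ}
    (α : Fin s → A) : (covSet Z α).ncard ≤ s * (Zᶜ : Set A).ncard := by
  have h : covSet Z α = ⋃ i ∈ (Finset.univ : Finset (Fin s)), (fun x => x - α i) '' Zᶜ := by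
    ext x
    simp only [covSet, Set.mem_setOf_eq, Set.mem_iUnion, Finset.mem_univ, exists_prop, true_and,
      Set.mem_image, Set.mem_compl_iff]
    refine exists_congr fun i => ⟨fun h => ⟨_, h, by simp⟩, ?_⟩
    rintro ⟨y, hy, rfl⟩
    simpa using hy
  rw [h]
  refine (Finset.set_ncard_biUnion_le _ _).trans ?_
  refine (Finset.sum_le_card_nsmul _ _ (Zᶜ : Set A).ncard ?_).trans (by simp)
  intro i _
  exact Set.ncard_image_le (Set.toFinite _)

/-- if `t` is the maximum length of a `Z`-independent sequence of distinct
elements of `A`, and `N = A \ Z` with stabilizer `H(N)`, then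
`(t - 1)·|N| ≥ |A| - |H(N)|`. -/
theorem stmt_16 {A : Type*} [AddCommGroup A] [Fintype A]
    (Z : Set A) (hZ : Z ≠ Set.univ)
    (t : ℕ)
    (hex : ∃ α : Fin t → A, Function.Injective α ∧ ZIndepSeq Z α)
    (hmax : ∀ (s : ℕ) (α : Fin s → A), Function.Injective α → ZIndepSeq Z α → s ≤ t) :
    (Fintype.card A : ℤ) - ({g : A | (fun x => g + x) '' Zᶜ = Zᶜ} : Set A).ncard ≤
      ((t : ℤ) - 1) * (Zᶜ : Set A).ncard := by
  classical
  obtain ⟨z, hz⟩ : ∃ z, z ∉ Z := by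
    by_contra hc
    push Not at hc
    exact hZ (Set.eq_univ_of_forall hc)
  let P : ℕ → Prop := fun s => ∃ α : Fin s → A, Function.Injective α ∧ ZIndepSeq Z α ∧
    ∃ x, x ∉ covSet Z α
  have hP0 : P 0 := ⟨Fin.elim0, fun i => i.elim0, ⟨Fin.elim0, fun i => i.elim0,
    fun i => i.elim0⟩, 0, fun ⟨i, _⟩ => i.elim0⟩
  have hPs := Nat.findGreatest_spec (P := P) (Nat.zero_le t) hP0
  have hPg : ∀ k, P k → k ≤ Nat.findGreatest P t := fun k hk =>
    Nat.le_findGreatest (hmax k _ hk.choose_spec.1 hk.choose_spec.2.1) hk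
  generalize Nat.findGreatest P t = s at hPs hPg
  obtain ⟨α, hinj, hind, x, hx⟩ := hPs
  have hst : s + 1 ≤ t := by
    obtain ⟨h1, h2⟩ := snoc_indep Z α hinj hind (z - x) x hx (by simpa using hz)
    exact hmax _ _ h1 h2
  have key : ∀ c ∉ covSet Z α, ∀ d ∉ covSet Z α, ∀ a, c + a ∉ Z → d + a ∉ Z := by
    intro c hc d hd a hca hda
    obtain ⟨h1, h2⟩ := snoc_indep Z α hinj hind a c hc hca
    have := hPg (s+1) ⟨_, h1, h2, d, ?_⟩
    · omega
    · rintro ⟨i, hi⟩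
      revert hi
      refine Fin.lastCases ?_ (fun i => ?_) i
      · simpa using hda
      · intro hi
        exact hd ⟨i, by simpa using hi⟩
  have hcard := covSet_card Z α
  have hC : (covSet Z α)ᶜ.ncard ≤ ({g : A | (fun x => g + x) '' Zᶜ = Zᶜ} : Set A).ncard := by
    refine Set.ncard_le_ncard_of_injOn (fun c => c - x) ?_ (fun a _ b _ h => by simpa using h)
      (Set.toFinite _)
    intro c hc
    ext y
    simp only [Set.mem_image, Set.mem_compl_iff]
    constructor
    · rintro ⟨w, hw, rfl⟩
      have := key x hx c hc (w - x) (by simpa using hw)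
      rwa [show c - x + w = c + (w - x) by abel]
    · intro hy
      refine ⟨x + (y - c), key c hc x hx (y - c) (by simpa using hy), by abel⟩
  have hsum := Set.ncard_add_ncard_compl (covSet Z α)
  rw [Nat.card_eq_fintype_card] at hsum
  have h3 : s * (Zᶜ : Set A).ncard ≤ (t - 1) * (Zᶜ : Set A).ncard :=
    Nat.mul_le_mul_right _ (by omega)
  have h4 : ((t : ℤ) - 1) = ((t - 1 : ℕ) : ℤ) := by omega
  rw [h4]
  have h5 : Fintype.card A ≤ (t - 1) * (Zᶜ : Set A).ncard +
    ({g : A | (fun x => g + x) '' Zᶜ = Zᶜ} : Set A).ncard := by omega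
  have h6 : (Fintype.card A : ℤ) ≤ ((t - 1 : ℕ) : ℤ) * ((Zᶜ : Set A).ncard : ℤ) +
    (({g : A | (fun x => g + x) '' Zᶜ = Zᶜ} : Set A).ncard : ℤ) := by exact_mod_cast h5
  linarith
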